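/- A De Morgan clone C with DMA ⊆ C contains a binary non-persistent function if and only if C contains one of the binary functions mhnp², mnp²₁, mnp²₂, mnp²₃, mnp²₄. Moreover, C contains a binary function which is harmonious and non-persistent if and only if C contains mhnp². -/

import Mathlib

set_option autoImplicit false

/-- The four truth values of the Belnap–Dunn logic. -/
inductive DM4 : Type
  | t
  | f
  | n
  | b
deriving DecidableEq

namespace DM4

/-- De Morgan negation. -/
def neg : DM4 → DM4
  | t => f
  | f => t
  | n => n
  | b => b

/-- Conflation. -/
def conf : DM4 → DM4
  | t => t
  | f => f
  | n => b
  | b => n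

/-- Meet in the truth order. -/
def meet : DM4 → DM4 → DM4
  | f, _ => f
  | _, f => f
  | t, y => y
  | x, t => x
  | n, n => n
  | b, b => b
  | n, b => f
  | b, n => f

/-- Join in the truth order. -/
def join : DM4 → DM4 → DM4
  | t, _ => t
  | _, t => t
  | f, y => y
  | x, f => x
  | n, n => n
  | b, b => b
  | n, b => t
  | b, n => t

/-- Meet in the information order (⊗). -/
def imeet : DM4 → DM4 → DM4
  | n, _ => n
  | _, n => n
  | b, y => y
  | x, b => x
  | t, t => t
  | f, f => f
  | t, f => n
  | f, t => n

/-- Join in the information order (⊕). -/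
def ijoin : DM4 → DM4 → DM4
  | b, _ => b
  | _, b => b
  | n, y => y
  | x, n => x
  | t, t => t
  | f, f => f
  | t, f => b
  | f, t => b

/-- The truth order: least element `f`, greatest element `t`, with `n`, `b` incomparable. -/
def tle (x y : DM4) : Prop := x = y ∨ x = f ∨ y = t

/-- The information order: least element `n`, greatest element `b`, with `t`, `f` incomparable. -/
def ile (x y : DM4) : Prop := x = y ∨ x = n ∨ y = b

/-- □: maps t to t and everything else to f. -/
def box : DM4 → DM4
  | t => t
  | _ => f

/-- ◇: maps f to f and everything else to t. -/
def diamond : DM4 → DM4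
  | f => f
  | _ => t

/-- Δ: maps t, b to t and n, f to f. -/
def delta : DM4 → DM4
  | t => t
  | b => t
  | _ => f

/-- ∇: maps t, n to t and b, f to f. -/
def nabla : DM4 → DM4
  | t => t
  | n => t
  | _ => f

/-- id_{b↦n}: maps b to n and fixes t, f, n. -/
def idbn : DM4 → DM4
  | b => n
  | x => x

/-- id_{n↦b}: maps n to b and fixes t, f, b. -/
def idnb : DM4 → DM4
  | n => b
  | x => x

/-- id_{n↦t}: maps n to t and fixes t, f, b. -/
def idnt : DM4 → DM4
  | n => t
  | x => x

/-- id_{b↦t}: maps b to t and fixes t, f, n. -/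
def idbt : DM4 → DM4
  | b => t
  | x => x

/-- t_{n↦n}: maps n to n and everything else to t. -/
def tnn : DM4 → DM4
  | n => n
  | _ => t

/-- t_{b↦b}: maps b to b and everything else to t. -/
def tbb : DM4 → DM4
  | b => b
  | _ => t

/-- The binary function pbp²₁. -/
def pbp1 : DM4 → DM4 → DM4
  | t, t => t | t, f => f | t, n => f | t, b => b
  | f, t => t | f, f => f | f, n => f | f, b => b
  | n, t => t | n, f => f | n, n => n | n, b => b
  | b, t => b | b, f => f | b, n => f | b, b => b

/-- The binary function pbp²₂. -/
def pbp2 : DM4 → DM4 → DM4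
  | t, t => t | t, f => f | t, n => n | t, b => f
  | f, t => t | f, f => f | f, n => n | f, b => f
  | n, t => n | n, f => f | n, n => n | n, b => f
  | b, t => t | b, f => f | b, n => n | b, b => b

/-- The binary function mnh²₁. -/
def mnh1 : DM4 → DM4 → DM4
  | t, t => f | t, f => f | t, n => n | t, b => b
  | f, t => f | f, f => f | f, n => n | f, b => b
  | n, t => f | n, f => f | n, n => n | n, b => f
  | b, t => f | b, f => f | b, n => n | b, b => b

/-- The binary function mnh²₂. -/
def mnh2 : DM4 → DM4 → DM4
  | t, t => f | t, f => f | t, n => n | t, b => b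
  | f, t => f | f, f => f | f, n => n | f, b => b
  | n, t => f | n, f => f | n, n => n | n, b => b
  | b, t => f | b, f => f | b, n => f | b, b => b

/-- The binary function mhnp². -/
def mhnp2 : DM4 → DM4 → DM4
  | t, _ => t
  | f, _ => t
  | n, b => f
  | n, _ => n
  | b, n => f
  | b, _ => b

/-- The binary function mnp²₁. -/
def mnp1 : DM4 → DM4 → DM4
  | t, b => b
  | t, _ => t
  | f, b => b
  | f, _ => t
  | n, b => f
  | n, _ => n
  | b, n => f
  | b, _ => b

/-- The binary function mnp²₂. -/
def mnp2 : DM4 → DM4 → DM4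
  | t, _ => t
  | f, _ => t
  | n, _ => n
  | b, n => f
  | b, _ => b

/-- The binary function mnp²₃. -/
def mnp3 : DM4 → DM4 → DM4
  | t, n => n
  | t, _ => t
  | f, n => n
  | f, _ => t
  | n, b => f
  | n, _ => n
  | b, n => f
  | b, _ => b

/-- The binary function mnp²₄. -/
def mnp4 : DM4 → DM4 → DM4
  | t, _ => t
  | f, _ => t
  | n, b => f
  | n, _ => n
  | b, _ => b

/-- The ternary function mhnp³. -/
def mhnp3 : DM4 → DM4 → DM4 → DM4
  | _, t, _ => f
  | _, f, _ => f
  | t, n, _ => n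
  | f, n, _ => f
  | b, n, _ => f
  | n, n, b => f
  | n, n, _ => n
  | t, b, _ => b
  | f, b, _ => f
  | n, b, _ => f
  | b, b, n => f
  | b, b, _ => b

/-- The set of designated values. -/
def Des : Set DM4 := {t, b}

/-- Designatedness as a Boolean predicate. -/
def des : DM4 → Bool
  | t => true
  | b => true
  | _ => false

/-- The protoimplication →_{t-max}. -/
def tmax (x y : DM4) : DM4 :=
  match des x, des y with
  | true, false => n
  | _, _ => t

/-- The protoimplication →_{i-max}. -/
def imax (x y : DM4) : DM4 :=
  match des x, des y with
  | true, false => f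
  | _, _ => b

/-- The protoimplication ↔_{t-min}. -/
def tmin (x y : DM4) : DM4 := if x = y then b else f

/-- The protoimplication ↔_{i-min}. -/
def imin (x y : DM4) : DM4 := if x = y then t else n

/-- A binary operation is a protoimplication if it satisfies Reflexivity and Modus Ponens
with respect to the designated set {t, b}. -/
def IsProtoimplication (r : DM4 → DM4 → DM4) : Prop :=
  (∀ a : DM4, r a a ∈ Des) ∧ ∀ a c : DM4, a ∈ Des → r a c ∈ Des → c ∈ Des

/-- `DMFun k` is the type of De Morgan functions of arity `k + 1` (arities are positive). -/
abbrev DMFun (k : ℕ) : Type := (Fin (k + 1) → DM4) → DM4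

/-- Membership in the clone generated by the family of operations `S`
(`S k` is the set of generators of arity `k + 1`). -/
inductive InClone (S : ∀ k : ℕ, Set (DMFun k)) : ∀ k : ℕ, DMFun k → Prop
  | base {k : ℕ} {g : DMFun k} : g ∈ S k → InClone S k g
  | proj {k : ℕ} (i : Fin (k + 1)) : InClone S k (fun x => x i)
  | comp {k m : ℕ} {g : DMFun m} {h : Fin (m + 1) → DMFun k} :
      InClone S m g → (∀ i, InClone S k (h i)) →
      InClone S k (fun x => g (fun i => h i x))

/-- A family of sets of De Morgan functions is a clone if it contains all projections
and is closed under composition. -/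
structure IsClone (C : ∀ k : ℕ, Set (DMFun k)) : Prop where
  proj : ∀ (k : ℕ) (i : Fin (k + 1)), (fun x => x i) ∈ C k
  comp : ∀ (k m : ℕ) (g : DMFun m) (h : Fin (m + 1) → DMFun k),
      g ∈ C m → (∀ i, h i ∈ C k) → (fun x => g (fun i => h i x)) ∈ C k

/-- The generating family consisting of a single unary operation. -/
def op1 (g : DM4 → DM4) : ∀ k : ℕ, Set (DMFun k)
  | 0 => {fun x => g (x 0)}
  | _ + 1 => ∅

/-- The generating family consisting of a single binary operation. -/
def op2 (g : DM4 → DM4 → DM4) : ∀ k : ℕ, Set (DMFun k)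
  | 1 => {fun x => g (x 0) (x 1)}
  | _ => ∅

/-- The generating family consisting of a single ternary operation. -/
def op3 (g : DM4 → DM4 → DM4 → DM4) : ∀ k : ℕ, Set (DMFun k)
  | 2 => {fun x => g (x 0) (x 1) (x 2)}
  | _ => ∅

/-- Union of two families of operations. -/
def funion (S T : ∀ k : ℕ, Set (DMFun k)) : ∀ k : ℕ, Set (DMFun k) := fun k => S k ∪ T k

infixr:65 " ⊹ " => funion

/-- The generators of DLat: ∧, ∨, t, f (constants as unary constant functions). -/
def DLatGen : ∀ k : ℕ, Set (DMFun k) :=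
  op2 meet ⊹ op2 join ⊹ op1 (fun _ => t) ⊹ op1 (fun _ => f)

/-- The generators of DMA: ∧, ∨, t, f, −. -/
def DMAGen : ∀ k : ℕ, Set (DMFun k) := DLatGen ⊹ op1 neg

/-- The generators of BiLat: ∧, ∨, t, f, ⊗, ⊕, n, b. -/
def BiLatGen : ∀ k : ℕ, Set (DMFun k) :=
  DLatGen ⊹ op2 imeet ⊹ op2 ijoin ⊹ op1 (fun _ => n) ⊹ op1 (fun _ => b)

/-- A De Morgan function is harmonious if it commutes with conflation. -/
def Harmonious {k : ℕ} (g : DMFun k) : Prop :=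
  ∀ x : Fin (k + 1) → DM4, g (fun i => conf (x i)) = conf (g x)

/-- A De Morgan function is positive if it is monotone in the componentwise truth order. -/
def Positive {k : ℕ} (g : DMFun k) : Prop :=
  ∀ x y : Fin (k + 1) → DM4, (∀ i, tle (x i) (y i)) → tle (g x) (g y)

/-- A De Morgan function is persistent if it is monotone in the componentwise
information order. -/
def Persistent {k : ℕ} (g : DMFun k) : Prop :=
  ∀ x y : Fin (k + 1) → DM4, (∀ i, ile (x i) (y i)) → ile (g x) (g y)

/-- A De Morgan function preserves a subset X of DM4 if it maps tuples from X into X. -/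
def Preserves {k : ℕ} (g : DMFun k) (X : Set DM4) : Prop :=
  ∀ x : Fin (k + 1) → DM4, (∀ i, x i ∈ X) → g x ∈ X

def B2 : Set DM4 := {t, f}
def K3 : Set DM4 := {t, n, f}
def P3 : Set DM4 := {t, b, f}

/-- A unary operation as a De Morgan function. -/
def toF1 (g : DM4 → DM4) : DMFun 0 := fun x => g (x 0)

/-- A binary operation as a De Morgan function. -/
def toF2 (g : DM4 → DM4 → DM4) : DMFun 1 := fun x => g (x 0) (x 1)

/-- A ternary operation as a De Morgan function. -/
def toF3 (g : DM4 → DM4 → DM4 → DM4) : DMFun 2 := fun x => g (x 0) (x 1) (x 2)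

/-- The clone generated by a family of operations, as a family of sets. -/
def CloneOf (S : ∀ k : ℕ, Set (DMFun k)) : ∀ k : ℕ, Set (DMFun k) :=
  fun k => {g | InClone S k g}

/-- Inclusion of families of operations. -/
def CloneLE (C D : ∀ k : ℕ, Set (DMFun k)) : Prop := ∀ k : ℕ, C k ⊆ D k


/-- A set of binary operations containing the projections, the constant `t` and the De Morgan
operations, and closed under composition. -/
structure IsBinaryClone (F : Set (DM4 → DM4 → DM4)) : Prop where
  fst : (fun x _ => x) ∈ F
  snd : (fun _ y => y) ∈ F
  top : (fun _ _ => t) ∈ F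
  neg_mem : ∀ {g}, g ∈ F → (fun x y => neg (g x y)) ∈ F
  meet_mem : ∀ {g h}, g ∈ F → h ∈ F → (fun x y => meet (g x y) (h x y)) ∈ F
  join_mem : ∀ {g h}, g ∈ F → h ∈ F → (fun x y => join (g x y) (h x y)) ∈ F
  comp : ∀ {g h k}, g ∈ F → h ∈ F → k ∈ F → (fun x y => g (h x y) (k x y)) ∈ F

/-- `x ∨ −x`, which identifies `f` with `t` and fixes the other values. -/
def excl (x : DM4) : DM4 := join x (neg x)

/-- The operation `s ∧ ((s ∧ r) ∨ g(s, y))` with `s = x ∨ −x` and `r = y ∨ −y`. It depends only on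
the values of `g` at `(t, n)`, `(t, b)`, `(n, b)` and `(b, n)`. -/
def sandwich (g : DM4 → DM4 → DM4) (x y : DM4) : DM4 :=
  meet (excl x) (join (meet (excl x) (excl y)) (g (excl x) y))

theorem IsBinaryClone.sandwich_mem {F : Set (DM4 → DM4 → DM4)} (hF : IsBinaryClone F)
    {g : DM4 → DM4 → DM4} (hg : g ∈ F) : sandwich g ∈ F := by
  have hx : (fun x _ => excl x) ∈ F := hF.join_mem hF.fst (hF.neg_mem hF.fst)
  have hy : (fun _ y => excl y) ∈ F := hF.join_mem hF.snd (hF.neg_mem hF.snd)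
  exact hF.meet_mem hx (hF.join_mem (hF.meet_mem hx hy) (hF.comp hg hx hF.snd))

theorem meet_join_self (x y : DM4) : meet x (join x y) = x := by
  cases x <;> cases y <;> rfl

/-- An operation that ignores the difference between `t` and `f` in its first argument and returns
`x ∨ −x` whenever `x ∨ −x ≤ y ∨ −y` is a `sandwich` as soon as it is one at four points. -/
theorem sandwich_eq {g T : DM4 → DM4 → DM4} (hexcl : ∀ x y, T (excl x) y = T x y)
    (hle : ∀ x y, meet (excl x) (excl y) = excl x → T x y = excl x)
    (htn : sandwich g t n = T t n) (htb : sandwich g t b = T t b)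
    (hnb : sandwich g n b = T n b) (hbn : sandwich g b n = T b n) : sandwich g = T := by
  funext x y
  by_cases h : meet (excl x) (excl y) = excl x
  · rw [sandwich, h, meet_join_self, hle x y h]
  · rw [← hexcl x y]
    cases x <;> cases y <;> first | exact absurd rfl h | assumption

/-- If `g` sends `(t, n), (b, n)` to `t, f`, then one of three minimal operations is generated. -/
theorem IsBinaryClone.of_separates_n {F : Set (DM4 → DM4 → DM4)} (hF : IsBinaryClone F)
    {g : DM4 → DM4 → DM4} (hg : g ∈ F) (htn : g t n = t) (hbn : g b n = f) :
    mhnp2 ∈ F ∨ mnp1 ∈ F ∨ mnp2 ∈ F := by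
  by_cases htb : g t b = f ∨ g t b = b
  · right; left
    have hk := hF.sandwich_mem (hF.meet_mem hg (hF.join_mem (hF.comp hg hF.top hF.snd) hF.snd))
    refine Set.mem_of_eq_of_mem (sandwich_eq ?_ ?_ ?_ ?_ ?_ ?_).symm hk
    · rintro (_ | _ | _ | _) (_ | _ | _ | _) <;> rfl
    · rintro (_ | _ | _ | _) (_ | _ | _ | _) <;> decide
    · simp [sandwich, excl, htn, meet, join, neg, mnp1]
    · rcases htb with h | h <;> simp [sandwich, excl, h, meet, join, neg, mnp1]
    · rcases htb with h | h <;> cases h' : g n b <;>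
        simp [sandwich, excl, h, h', meet, join, neg, mnp1]
    · simp [sandwich, excl, hbn, meet, join, neg, mnp1]
  · have hk := hF.sandwich_mem (hF.join_mem hg (hF.meet_mem hF.fst hF.snd))
    by_cases hnb : g n b = f ∨ g n b = b
    · left
      refine Set.mem_of_eq_of_mem (sandwich_eq ?_ ?_ ?_ ?_ ?_ ?_).symm hk
      · rintro (_ | _ | _ | _) (_ | _ | _ | _) <;> rfl
      · rintro (_ | _ | _ | _) (_ | _ | _ | _) <;> decide
      · simp [sandwich, excl, htn, meet, join, neg, mhnp2]
      · cases h : g t b <;> simp_all [sandwich, excl, meet, join, neg, mhnp2]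
      · rcases hnb with h | h <;> simp [sandwich, excl, h, meet, join, neg, mhnp2]
      · simp [sandwich, excl, hbn, meet, join, neg, mhnp2]
    · right; right
      refine Set.mem_of_eq_of_mem (sandwich_eq ?_ ?_ ?_ ?_ ?_ ?_).symm hk
      · rintro (_ | _ | _ | _) (_ | _ | _ | _) <;> rfl
      · rintro (_ | _ | _ | _) (_ | _ | _ | _) <;> decide
      · simp [sandwich, excl, htn, meet, join, neg, mnp2]
      · cases h : g t b <;> simp_all [sandwich, excl, meet, join, neg, mnp2]
      · cases h : g n b <;> simp_all [sandwich, excl, meet, join, neg, mnp2]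
      · simp [sandwich, excl, hbn, meet, join, neg, mnp2]

/-- If `g` sends `(t, b), (n, b)` to `t, f`, then one of three minimal operations is generated. -/
theorem IsBinaryClone.of_separates_b {F : Set (DM4 → DM4 → DM4)} (hF : IsBinaryClone F)
    {g : DM4 → DM4 → DM4} (hg : g ∈ F) (htb : g t b = t) (hnb : g n b = f) :
    mhnp2 ∈ F ∨ mnp3 ∈ F ∨ mnp4 ∈ F := by
  by_cases htn : g t n = f ∨ g t n = n
  · right; left
    have hk := hF.sandwich_mem (hF.meet_mem hg (hF.join_mem (hF.comp hg hF.top hF.snd) hF.snd))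
    refine Set.mem_of_eq_of_mem (sandwich_eq ?_ ?_ ?_ ?_ ?_ ?_).symm hk
    · rintro (_ | _ | _ | _) (_ | _ | _ | _) <;> rfl
    · rintro (_ | _ | _ | _) (_ | _ | _ | _) <;> decide
    · rcases htn with h | h <;> simp [sandwich, excl, h, meet, join, neg, mnp3]
    · simp [sandwich, excl, htb, meet, join, neg, mnp3]
    · simp [sandwich, excl, hnb, meet, join, neg, mnp3]
    · rcases htn with h | h <;> cases h' : g b n <;>
        simp [sandwich, excl, h, h', meet, join, neg, mnp3]
  · have hk := hF.sandwich_mem (hF.join_mem hg (hF.meet_mem hF.fst hF.snd))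
    by_cases hbn : g b n = f ∨ g b n = n
    · left
      refine Set.mem_of_eq_of_mem (sandwich_eq ?_ ?_ ?_ ?_ ?_ ?_).symm hk
      · rintro (_ | _ | _ | _) (_ | _ | _ | _) <;> rfl
      · rintro (_ | _ | _ | _) (_ | _ | _ | _) <;> decide
      · cases h : g t n <;> simp_all [sandwich, excl, meet, join, neg, mhnp2]
      · simp [sandwich, excl, htb, meet, join, neg, mhnp2]
      · simp [sandwich, excl, hnb, meet, join, neg, mhnp2]
      · rcases hbn with h | h <;> simp [sandwich, excl, h, meet, join, neg, mhnp2]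
    · right; right
      refine Set.mem_of_eq_of_mem (sandwich_eq ?_ ?_ ?_ ?_ ?_ ?_).symm hk
      · rintro (_ | _ | _ | _) (_ | _ | _ | _) <;> rfl
      · rintro (_ | _ | _ | _) (_ | _ | _ | _) <;> decide
      · cases h : g t n <;> simp_all [sandwich, excl, meet, join, neg, mnp4]
      · simp [sandwich, excl, htb, meet, join, neg, mnp4]
      · simp [sandwich, excl, hnb, meet, join, neg, mnp4]
      · cases h : g b n <;> simp_all [sandwich, excl, meet, join, neg, mnp4]

/-- A set of pairs of truth values forming a De Morgan subalgebra of the square of `DM4`. -/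
structure IsSubalgebra (J : DM4 → DM4 → Prop) : Prop where
  top : J t t
  neg_mem : ∀ {u v}, J u v → J (neg u) (neg v)
  meet_mem : ∀ {u v u' v'}, J u v → J u' v' → J (meet u u') (meet v v')

theorem IsSubalgebra.tf_of_not_ile {J : DM4 → DM4 → Prop} (hJ : IsSubalgebra J) (hnt : J n t)
    (htb : J t b) {u v : DM4} (huv : J u v) (h : ¬ ile u v) : J t f := by
  have of_ft : J f t → J t f := hJ.neg_mem
  have of_tn : J t n → J t f := fun h => hJ.meet_mem h htb
  have of_bt : J b t → J t f := fun h => of_ft (hJ.meet_mem h hnt)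
  cases u <;> cases v <;> simp [ile] at h
  · exact huv
  · exact of_tn huv
  · exact of_ft huv
  · exact of_tn (hJ.neg_mem huv)
  · exact of_bt huv
  · exact of_bt (hJ.neg_mem huv)
  · exact of_tn (hJ.neg_mem (hJ.meet_mem huv hnt))

theorem IsSubalgebra.of_ile {J : DM4 → DM4 → Prop} (hJ : IsSubalgebra J) (hnt : J n t)
    (htb : J t b) {u v : DM4} (h : ile u v) (hnn : u = n → v = n → J n n)
    (hbb : u = b → v = b → J b b) : J u v := by
  cases u <;> cases v <;> simp [ile] at h
  · exact hJ.top
  · exact htb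
  · exact hJ.neg_mem hJ.top
  · exact hJ.neg_mem htb
  · exact hnt
  · exact hJ.neg_mem hnt
  · exact hnn rfl rfl
  · exact hJ.meet_mem hnt htb
  · exact hbb rfl rfl

/-- The pairs of values that members of `F` take at two given points. -/
def Joint (F : Set (DM4 → DM4 → DM4)) (p q : DM4 × DM4) (u v : DM4) : Prop :=
  ∃ h ∈ F, h p.1 p.2 = u ∧ h q.1 q.2 = v

theorem IsBinaryClone.isSubalgebra_joint {F : Set (DM4 → DM4 → DM4)} (hF : IsBinaryClone F)
    (p q : DM4 × DM4) : IsSubalgebra (Joint F p q) where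
  top := ⟨_, hF.top, rfl, rfl⟩
  neg_mem := by
    rintro _ _ ⟨h, hh, rfl, rfl⟩
    exact ⟨_, hF.neg_mem hh, rfl, rfl⟩
  meet_mem := by
    rintro _ _ _ _ ⟨h, hh, rfl, rfl⟩ ⟨k, hk, rfl, rfl⟩
    exact ⟨_, hF.meet_mem hh hk, rfl, rfl⟩

theorem IsBinaryClone.joint_apply {F : Set (DM4 → DM4 → DM4)} (hF : IsBinaryClone F)
    {p q : DM4 × DM4} {g : DM4 → DM4 → DM4} (hg : g ∈ F) {u v u' v' : DM4}
    (huv : Joint F p q u v) (huv' : Joint F p q u' v') : Joint F p q (g u u') (g v v') := by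
  obtain ⟨h, hh, rfl, rfl⟩ := huv
  obtain ⟨k, hk, rfl, rfl⟩ := huv'
  exact ⟨_, hF.comp hg hh hk, rfl, rfl⟩

theorem IsBinaryClone.exists_minimal {F : Set (DM4 → DM4 → DM4)} (hF : IsBinaryClone F)
    {g : DM4 → DM4 → DM4} (hg : g ∈ F) {x y x' y' : DM4} (hx : ile x x') (hy : ile y y')
    (h : ¬ ile (g x y) (g x' y')) :
    mhnp2 ∈ F ∨ mnp1 ∈ F ∨ mnp2 ∈ F ∨ mnp3 ∈ F ∨ mnp4 ∈ F := by
  by_cases hbb : (x = b ∧ x' = b) ∨ (y = b ∧ y' = b)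
  · have hnn : ¬ (x = n ∧ x' = n) ∧ ¬ (y = n ∧ y' = n) := by
      refine ⟨?_, ?_⟩ <;> rintro ⟨rfl, rfl⟩ <;>
        obtain ⟨h₁, h₂⟩ | ⟨h₁, h₂⟩ := hbb <;> subst_vars <;> simp_all [ile]
    have hJ := hF.isSubalgebra_joint (n, b) (t, b)
    have hnt : Joint F (n, b) (t, b) n t := ⟨_, hF.fst, rfl, rfl⟩
    have hbb : Joint F (n, b) (t, b) b b := ⟨_, hF.snd, rfl, rfl⟩
    have htb : Joint F (n, b) (t, b) t b := hJ.neg_mem (hJ.meet_mem hnt hbb)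
    have key := hF.joint_apply hg
      (hJ.of_ile hnt htb hx (fun h₁ h₂ => absurd ⟨h₁, h₂⟩ hnn.1) fun _ _ => hbb)
      (hJ.of_ile hnt htb hy (fun h₁ h₂ => absurd ⟨h₁, h₂⟩ hnn.2) fun _ _ => hbb)
    obtain ⟨k, hk, hp, hq⟩ := hJ.neg_mem (hJ.tf_of_not_ile hnt htb key h)
    have := hF.of_separates_b hk hq hp
    tauto
  · rw [not_or] at hbb
    have hJ := hF.isSubalgebra_joint (t, n) (b, n)
    have htb : Joint F (t, n) (b, n) t b := ⟨_, hF.fst, rfl, rfl⟩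
    have hnn : Joint F (t, n) (b, n) n n := ⟨_, hF.snd, rfl, rfl⟩
    have hnt : Joint F (t, n) (b, n) n t := hJ.neg_mem (hJ.meet_mem htb hnn)
    have key := hF.joint_apply hg
      (hJ.of_ile hnt htb hx (fun _ _ => hnn) fun h₁ h₂ => absurd ⟨h₁, h₂⟩ hbb.1)
      (hJ.of_ile hnt htb hy (fun _ _ => hnn) fun h₁ h₂ => absurd ⟨h₁, h₂⟩ hbb.2)
    obtain ⟨k, hk, hp, hq⟩ := hJ.tf_of_not_ile hnt htb key h
    have := hF.of_separates_n hk hp hq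
    tauto

theorem exists_toF2_eq (g : DMFun 1) : ∃ h, toF2 h = g :=
  ⟨fun x y => g ![x, y], funext fun x => congrArg g (by ext i; fin_cases i <;> rfl)⟩

theorem persistent_toF2 {g : DM4 → DM4 → DM4} :
    Persistent (toF2 g) ↔ ∀ x y x' y', ile x x' → ile y y' → ile (g x y) (g x' y') :=
  ⟨fun h x y x' y' hx hy => h ![x, y] ![x', y'] (Fin.forall_fin_two.2 ⟨hx, hy⟩),
    fun h _ _ hxy => h _ _ _ _ (hxy 0) (hxy 1)⟩

theorem harmonious_toF2 {g : DM4 → DM4 → DM4} :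
    Harmonious (toF2 g) ↔ ∀ x y, g (conf x) (conf y) = conf (g x y) :=
  ⟨fun h x y => h ![x, y], fun h x => h (x 0) (x 1)⟩

theorem conf_neg (x : DM4) : conf (neg x) = neg (conf x) := by
  cases x <;> rfl

theorem conf_meet (x y : DM4) : conf (meet x y) = meet (conf x) (conf y) := by
  cases x <;> cases y <;> rfl

theorem conf_join (x y : DM4) : conf (join x y) = join (conf x) (conf y) := by
  cases x <;> cases y <;> rfl

theorem isBinaryClone_of_isClone {C : ∀ k : ℕ, Set (DMFun k)} (hC : IsClone C)
    (hDMA : ∀ k g, InClone DMAGen k g → g ∈ C k) : IsBinaryClone {g | toF2 g ∈ C 1} where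
  fst := hC.proj 1 0
  snd := hC.proj 1 1
  top := hC.comp 1 0 (fun _ => t) (fun _ x => x 0)
    (hDMA _ _ (.base (.inl (.inr (.inr (.inl rfl)))))) fun _ => hC.proj 1 0
  neg_mem {g} hg := hC.comp 1 0 (fun x => neg (x 0)) (fun _ => toF2 g)
    (hDMA _ _ (.base (.inr rfl))) fun _ => hg
  meet_mem {g h} hg hh := hC.comp 1 1 (fun x => meet (x 0) (x 1)) ![toF2 g, toF2 h]
    (hDMA _ _ (.base (.inl (.inl rfl)))) (Fin.forall_fin_two.2 ⟨hg, hh⟩)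
  join_mem {g h} hg hh := hC.comp 1 1 (fun x => join (x 0) (x 1)) ![toF2 g, toF2 h]
    (hDMA _ _ (.base (.inl (.inr (.inl rfl))))) (Fin.forall_fin_two.2 ⟨hg, hh⟩)
  comp {g h k} hg hh hk := hC.comp 1 1 (toF2 g) ![toF2 h, toF2 k] hg
    (Fin.forall_fin_two.2 ⟨hh, hk⟩)

theorem IsBinaryClone.harmonious {F : Set (DM4 → DM4 → DM4)} (hF : IsBinaryClone F) :
    IsBinaryClone {g | g ∈ F ∧ ∀ x y, g (conf x) (conf y) = conf (g x y)} where
  fst := ⟨hF.fst, fun _ _ => rfl⟩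
  snd := ⟨hF.snd, fun _ _ => rfl⟩
  top := ⟨hF.top, fun _ _ => rfl⟩
  neg_mem hg := ⟨hF.neg_mem hg.1, fun x y => by simp only [hg.2, conf_neg]⟩
  meet_mem hg hh := ⟨hF.meet_mem hg.1 hh.1, fun x y => by simp only [hg.2, hh.2, conf_meet]⟩
  join_mem hg hh := ⟨hF.join_mem hg.1 hh.1, fun x y => by simp only [hg.2, hh.2, conf_join]⟩
  comp hg hh hk := ⟨hF.comp hg.1 hh.1 hk.1, fun x y => by simp only [hg.2, hh.2, hk.2]⟩

theorem not_persistent_toF2 {g : DM4 → DM4 → DM4} {x y x' y' : DM4} (hx : ile x x')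
    (hy : ile y y') (h : ¬ ile (g x y) (g x' y')) : ¬ Persistent (toF2 g) :=
  fun hg => h (persistent_toF2.1 hg _ _ _ _ hx hy)

theorem not_persistent_mhnp2 : ¬ Persistent (toF2 mhnp2) :=
  not_persistent_toF2 (x := t) (x' := b) (y := n) (y' := n) (by simp [ile]) (by simp [ile])
    (by simp [ile, mhnp2])

theorem not_persistent_mnp1 : ¬ Persistent (toF2 mnp1) :=
  not_persistent_toF2 (x := t) (x' := b) (y := n) (y' := n) (by simp [ile]) (by simp [ile])
    (by simp [ile, mnp1])

theorem not_persistent_mnp2 : ¬ Persistent (toF2 mnp2) :=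
  not_persistent_toF2 (x := t) (x' := b) (y := n) (y' := n) (by simp [ile]) (by simp [ile])
    (by simp [ile, mnp2])

theorem not_persistent_mnp3 : ¬ Persistent (toF2 mnp3) :=
  not_persistent_toF2 (x := n) (x' := t) (y := b) (y' := b) (by simp [ile]) (by simp [ile])
    (by simp [ile, mnp3])

theorem not_persistent_mnp4 : ¬ Persistent (toF2 mnp4) :=
  not_persistent_toF2 (x := n) (x' := t) (y := b) (y' := b) (by simp [ile]) (by simp [ile])
    (by simp [ile, mnp4])

theorem harmonious_mhnp2 : Harmonious (toF2 mhnp2) :=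
  harmonious_toF2.2 (by rintro (_ | _ | _ | _) (_ | _ | _ | _) <;> rfl)

/-- A clone above DMA contains a binary non-persistent function
iff it contains one of mhnp², mnp²₁, mnp²₂, mnp²₃, mnp²₄; it contains a binary
harmonious non-persistent function iff it contains mhnp². -/
theorem binary_non_persistent (C : ∀ k : ℕ, Set (DMFun k))
    (hC : IsClone C) (hDMA : ∀ k g, InClone DMAGen k g → g ∈ C k) :
    ((∃ g ∈ C 1, ¬ Persistent g) ↔
      (toF2 mhnp2 ∈ C 1 ∨ toF2 mnp1 ∈ C 1 ∨ toF2 mnp2 ∈ C 1 ∨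
        toF2 mnp3 ∈ C 1 ∨ toF2 mnp4 ∈ C 1)) ∧
    ((∃ g ∈ C 1, Harmonious g ∧ ¬ Persistent g) ↔ toF2 mhnp2 ∈ C 1) := by
  have hF := isBinaryClone_of_isClone hC hDMA
  refine ⟨⟨?_, ?_⟩, ?_, fun h => ⟨_, h, harmonious_mhnp2, not_persistent_mhnp2⟩⟩
  · rintro ⟨g, hg, hgp⟩
    obtain ⟨g, rfl⟩ := exists_toF2_eq g
    simp only [persistent_toF2, not_forall] at hgp
    obtain ⟨x, y, x', y', hx, hy, h⟩ := hgp
    exact hF.exists_minimal hg hx hy h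
  · rintro (h | h | h | h | h)
    exacts [⟨_, h, not_persistent_mhnp2⟩, ⟨_, h, not_persistent_mnp1⟩,
      ⟨_, h, not_persistent_mnp2⟩, ⟨_, h, not_persistent_mnp3⟩, ⟨_, h, not_persistent_mnp4⟩]
  · rintro ⟨g, hg, hgh, hgp⟩
    obtain ⟨g, rfl⟩ := exists_toF2_eq g
    rw [harmonious_toF2] at hgh
    simp only [persistent_toF2, not_forall] at hgp
    obtain ⟨x, y, x', y', hx, hy, h⟩ := hgp
    obtain h | h | h | h | h := hF.harmonious.exists_minimal ⟨hg, hgh⟩ hx hy h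
    · exact h.1
    · exact absurd (h.2 t n) (by decide)
    · exact absurd (h.2 b n) (by decide)
    · exact absurd (h.2 t n) (by decide)
    · exact absurd (h.2 b n) (by decide)

end DM4
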